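/- There do not exist: a complex Hilbert space H; a star-algebra homomorphism π from the C*-algebra C₀(ℤ, ℂ) of functions ℤ → ℂ vanishing at infinity (with pointwise operations and supremum norm) to the algebra of bounded operators on H; a unitary operator U on H satisfying the covariance relation U π(φ) U⁻¹ = π(φ(·−1)) for all φ ∈ C₀(ℤ, ℂ); and an injective continuous linear map j : C₀(ℤ, ℂ) → H such that j(φ·ξ) = π(φ)(j(ξ)) for all φ, ξ ∈ C₀(ℤ, ℂ) (pointwise product), and j(ξ(·−1)) = U(j(ξ)) for all ξ ∈ C₀(ℤ, ℂ). -/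

import Mathlib

/-!
The indicator functions `δ n` are mutually orthogonal idempotents, so the vectors `j (δ n)` are
pairwise orthogonal, and the shift `U` being isometric they all have the same norm `c`, with
`c > 0` by injectivity of `j`. By Pythagoras the image under `j` of the indicator of `{0, …, N-1}`
has squared norm `N * c ^ 2`; but this indicator has supremum norm at most `1`, so continuity of `j`
bounds `N * c ^ 2` by `‖j‖ ^ 2` for every `N`, which is absurd. Working with indicators of finite
sets avoids having to exhibit an explicit element of `C₀(ℤ)` outside `ℓ²(ℤ)`.
-/

open ZeroAtInfty

/-- The indicator function of a finite set of integers, as an element of `C₀(ℤ, ℂ)`. -/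
noncomputable def finsetIndicator (s : Finset ℤ) : C₀(ℤ, ℂ) where
  toFun m := if m ∈ s then 1 else 0
  continuous_toFun := continuous_of_discreteTopology
  zero_at_infty' := by
    rw [Filter.cocompact_eq_cofinite]
    refine tendsto_const_nhds.congr' ?_
    filter_upwards [s.finite_toSet.compl_mem_cofinite] with m hm
    have hm' : m ∉ s := hm
    simp [hm']

lemma finsetIndicator_apply (s : Finset ℤ) (m : ℤ) :
    finsetIndicator s m = if m ∈ s then 1 else 0 := rfl

lemma norm_finsetIndicator_le (s : Finset ℤ) : ‖finsetIndicator s‖ ≤ 1 := by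
  rw [← ZeroAtInftyContinuousMap.norm_toBCF_eq_norm,
    BoundedContinuousFunction.norm_le zero_le_one]
  intro m
  change ‖finsetIndicator s m‖ ≤ 1
  rw [finsetIndicator_apply]
  split_ifs <;> simp

/-- A vector `j (finsetIndicator s)` is fixed by the self-adjoint operator `π (finsetIndicator s)`,
which annihilates `j (finsetIndicator t)` when `s` and `t` are disjoint. -/
lemma inner_map_finsetIndicator_eq_zero
    {H : Type} [NormedAddCommGroup H] [InnerProductSpace ℂ H] [CompleteSpace H]
    (π : C₀(ℤ, ℂ) →⋆ₙₐ[ℂ] (H →L[ℂ] H)) (j : C₀(ℤ, ℂ) →L[ℂ] H)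
    (hj_mul : ∀ φ ξ : C₀(ℤ, ℂ), j (φ * ξ) = π φ (j ξ))
    {s t : Finset ℤ} (hst : Disjoint s t) :
    inner ℂ (j (finsetIndicator s)) (j (finsetIndicator t)) = 0 := by
  have h_idem : finsetIndicator s * finsetIndicator s = finsetIndicator s := by
    ext m
    simp [finsetIndicator_apply]
  have h_star : star (finsetIndicator s) = finsetIndicator s := by
    ext m
    simp [finsetIndicator_apply, apply_ite]
  have h_disj : finsetIndicator s * finsetIndicator t = 0 := by
    ext m
    have hm_t : m ∈ s → m ∉ t := fun h => Finset.disjoint_left.mp hst h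
    by_cases hm : m ∈ s <;> simp_all [finsetIndicator_apply]
  have h_adj : ContinuousLinearMap.adjoint (π (finsetIndicator s)) = π (finsetIndicator s) := by
    rw [← ContinuousLinearMap.star_eq_adjoint, ← map_star, h_star]
  calc inner ℂ (j (finsetIndicator s)) (j (finsetIndicator t))
      = inner ℂ (π (finsetIndicator s) (j (finsetIndicator s))) (j (finsetIndicator t)) := by
        rw [← hj_mul, h_idem]
    _ = inner ℂ (j (finsetIndicator s)) (π (finsetIndicator s) (j (finsetIndicator t))) := by
        rw [← ContinuousLinearMap.adjoint_inner_right, h_adj]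
    _ = 0 := by rw [← hj_mul, h_disj, map_zero, inner_zero_right]

/-- There is no Hilbert-space star-representation of the crossed product
`ℤ ⋉ C₀(ℤ)` (given by a covariant pair `(π, U)`) containing the topologically irreducible
module `C₀(ℤ)` via an injective continuous linear map `j` intertwining the pointwise
multiplication action and the shift. -/
theorem no_extension_of_c0_module
    (H : Type) [NormedAddCommGroup H] [InnerProductSpace ℂ H] [CompleteSpace H]
    (π : C₀(ℤ, ℂ) →⋆ₙₐ[ℂ] (H →L[ℂ] H))
    (U : H →L[ℂ] H) (hU : U ∈ unitary (H →L[ℂ] H))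
    (hcov : ∀ φ ψ : C₀(ℤ, ℂ), (∀ m : ℤ, ψ m = φ (m - 1)) → U * π φ * star U = π ψ)
    (j : C₀(ℤ, ℂ) →L[ℂ] H) (hj_inj : Function.Injective j)
    (hj_mul : ∀ φ ξ : C₀(ℤ, ℂ), j (φ * ξ) = π φ (j ξ))
    (hj_shift : ∀ ξ ψ : C₀(ℤ, ℂ), (∀ m : ℤ, ψ m = ξ (m - 1)) → j ψ = U (j ξ)) :
    False := by
  have h_iso : ∀ x : H, ‖U x‖ = ‖x‖ := ContinuousLinearMap.norm_map_of_mem_unitary hU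
  have h_norm : ∀ n : ℕ, ‖j (finsetIndicator {(n : ℤ)})‖ = ‖j (finsetIndicator {0})‖ := by
    intro n
    induction n with
    | zero => simp
    | succ n ih =>
      rw [← ih, hj_shift (finsetIndicator {(n : ℤ)}) (finsetIndicator {((n + 1 : ℕ) : ℤ)}), h_iso]
      intro m
      simp [finsetIndicator_apply, sub_eq_iff_eq_add]
  have h_pos : 0 < ‖j (finsetIndicator {0})‖ := by
    rw [norm_pos_iff, ne_eq, map_eq_zero_iff j hj_inj]
    intro h
    simpa [finsetIndicator_apply] using DFunLike.congr_fun h 0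
  have h_sum : ∀ N : ℕ, ‖j (finsetIndicator (Finset.Ico 0 (N : ℤ)))‖ ^ 2
      = N * ‖j (finsetIndicator {0})‖ ^ 2 := by
    intro N
    induction N with
    | zero =>
      have : finsetIndicator (Finset.Ico 0 ((0 : ℕ) : ℤ)) = 0 := by
        ext m
        simp [finsetIndicator_apply]
      rw [this]
      simp
    | succ N ih =>
      have h_split : finsetIndicator (Finset.Ico 0 ((N + 1 : ℕ) : ℤ))
          = finsetIndicator (Finset.Ico 0 (N : ℤ)) + finsetIndicator {(N : ℤ)} := by
        ext m
        simp only [ZeroAtInftyContinuousMap.add_apply, finsetIndicator_apply, Finset.mem_Ico,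
          Finset.mem_singleton]
        split_ifs <;> first | omega | simp
      have h_orth := inner_map_finsetIndicator_eq_zero π j hj_mul
        (s := Finset.Ico 0 (N : ℤ)) (t := {(N : ℤ)}) (by simp)
      have h_pyth := norm_add_sq_eq_norm_sq_add_norm_sq_of_inner_eq_zero _ _ h_orth
      rw [h_split, map_add, sq, h_pyth, ← sq, ← sq, ih, h_norm]
      push_cast
      ring
  obtain ⟨N, hN⟩ := exists_nat_gt (‖j‖ ^ 2 / ‖j (finsetIndicator {0})‖ ^ 2)
  rw [div_lt_iff₀ (by positivity), ← h_sum] at hN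
  have h_le : ‖j (finsetIndicator (Finset.Ico 0 (N : ℤ)))‖ ≤ ‖j‖ :=
    j.le_of_opNorm_le_of_le le_rfl (norm_finsetIndicator_le _) |>.trans_eq (mul_one _)
  exact absurd hN (not_lt.mpr (by gcongr))
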